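/- Let μ be a Borel probability measure on ℝ with ∫|x|² dμ < ∞. Then for every t ∈ ℝ, the series ∑_{n=0}^∞ f₂(n)·tⁿ/(n!)² converges (HasSum) with sum (1 + m₁²·t) · exp((m₂ − m₁²)·t). -/

import Mathlib

/-!
Expanding both determinants over permutations, `E[(det A)²]` is the sum over pairs `(σ, τ)` of
`sgn σ · sgn τ · ∏ᵢ E[A i (σ i) · A i (τ i)]`, because the rows of `A` are independent. The factor
`E[A i j · A i k]` is `m₂` if `j = k` and `m₁²` otherwise, i.e. the `(j, k)` entry of
`M = (m₂ - m₁²) • 1 + m₁² • J` with `J` the all-ones matrix (`integral_entry_mul_entry`). For each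
fixed `σ` the sum over `τ` is `det M`, so `f₂(n) = n! · det M` (`detMoment_two`). As `M` is a rank-one
perturbation of a scalar matrix, `det M = aⁿ + n b aⁿ⁻¹` with `a = m₂ - m₁²` and `b = m₁²`
(`det_secondMomentMatrix`). Dividing by `n!` and summing gives `exp (a t) + b t exp (a t)`.
-/


open MeasureTheory

/-- The `r`-th moment `m_r = ∫ x^r dμ` of a measure `μ` on `ℝ`. -/
noncomputable def mom (μ : Measure ℝ) (r : ℕ) : ℝ := ∫ x, x ^ r ∂μ

/-- `f_k(n) = ∫ (det A)^k dP_n(A)` where the `n²` entries of `A` are i.i.d. with law `μ`. -/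
noncomputable def detMoment (μ : Measure ℝ) (k n : ℕ) : ℝ :=
  ∫ A : Fin n → Fin n → ℝ, (Matrix.det (Matrix.of A)) ^ k
    ∂(Measure.pi fun _ : Fin n => Measure.pi fun _ : Fin n => μ)

/-- The matrix `a • 1 + b • J`, where `J` has all entries `1`. For `a = m₂ - m₁²` and `b = m₁²` it
is the matrix of second moments of a vector with i.i.d. coordinates. -/
def secondMomentMatrix (a b : ℝ) (n : ℕ) : Matrix (Fin n) (Fin n) ℝ :=
  Matrix.of fun j k => if j = k then a + b else b

/-- The truncated exponent `n - 1` at `n = 0` is harmless because of the factor `n`. -/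
theorem det_secondMomentMatrix (a b : ℝ) (n : ℕ) :
    (secondMomentMatrix a b n).det = a ^ n + n * b * a ^ (n - 1) := by
  -- `a • 1 + b • J` is `a • 1 - u vᵀ` for `u = (-b, …, -b)` and `v = (1, …, 1)`, so its determinant
  -- is the characteristic polynomial of `u vᵀ` at `a`; unlike the matrix determinant lemma, this
  -- needs no invertibility of `a`.
  have h := congrArg (Polynomial.eval a)
    (Matrix.charpoly_vecMulVec (fun _ : Fin n => -b) (fun _ : Fin n => (1 : ℝ)))
  rw [Matrix.eval_charpoly] at h
  have hM : secondMomentMatrix a b n = Matrix.scalar (Fin n) a -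
      Matrix.vecMulVec (fun _ : Fin n => -b) (fun _ : Fin n => (1 : ℝ)) := by
    ext j k
    by_cases hjk : j = k <;> simp [secondMomentMatrix, Matrix.vecMulVec_apply, hjk]
  rw [hM, h]
  simp [dotProduct]

section SecondMoments

variable {μ : Measure ℝ} [IsProbabilityMeasure μ]

theorem memLp_eval {n : ℕ} (hμ : MemLp (fun x : ℝ => x) 2 μ) (j : Fin n) :
    MemLp (fun r : Fin n → ℝ => r j) 2 (Measure.pi fun _ : Fin n => μ) :=
  hμ.comp_measurePreserving (measurePreserving_eval (fun _ : Fin n => μ) j)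

theorem integrable_entry_mul_entry {n : ℕ} (hμ : MemLp (fun x : ℝ => x) 2 μ) (j k : Fin n) :
    Integrable (fun r : Fin n → ℝ => r j * r k) (Measure.pi fun _ : Fin n => μ) :=
  (memLp_eval hμ j).integrable_mul (memLp_eval hμ k)

theorem integral_entry_mul_entry {n : ℕ} (j k : Fin n) :
    ∫ r : Fin n → ℝ, r j * r k ∂(Measure.pi fun _ : Fin n => μ) =
      secondMomentMatrix (mom μ 2 - mom μ 1 ^ 2) (mom μ 1 ^ 2) n j k := by
  by_cases hjk : j = k
  · subst hjk
    have h := integral_comp_eval (μ := fun _ : Fin n => μ) (i := j) (f := fun x : ℝ => x ^ 2)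
      (by fun_prop)
    simpa [secondMomentMatrix, mom, ← pow_two] using h
  · have hind := (ProbabilityTheory.iIndepFun_pi (μ := fun _ : Fin n => μ)
      (X := fun (_ : Fin n) (x : ℝ) => x) (fun _ => by fun_prop)).indepFun hjk
    have h (i : Fin n) : ∫ r : Fin n → ℝ, r i ∂(Measure.pi fun _ : Fin n => μ) = mom μ 1 := by
      have := integral_comp_eval (μ := fun _ : Fin n => μ) (i := i) (f := fun x : ℝ => x)
        (by fun_prop)
      simpa [mom] using this
    rw [hind.integral_fun_mul_eq_mul_integral (measurable_pi_apply j).aestronglyMeasurable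
      (measurable_pi_apply k).aestronglyMeasurable, h, h]
    simp [secondMomentMatrix, hjk, pow_two]

/-- For fixed `σ` the sum over `τ` is `sgn σ` times the determinant of `M` with its rows permuted
by `σ`, and the two signs cancel. -/
theorem sum_sum_sign_mul_prod {n : ℕ} (M : Matrix (Fin n) (Fin n) ℝ) :
    ∑ σ : Equiv.Perm (Fin n), ∑ τ : Equiv.Perm (Fin n),
      ((Equiv.Perm.sign σ : ℤ) : ℝ) * ((Equiv.Perm.sign τ : ℤ) : ℝ) * ∏ i, M (σ i) (τ i) =
      (n.factorial : ℝ) * M.det := by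
  have h (σ : Equiv.Perm (Fin n)) : ∑ τ : Equiv.Perm (Fin n),
      ((Equiv.Perm.sign σ : ℤ) : ℝ) * ((Equiv.Perm.sign τ : ℤ) : ℝ) * ∏ i, M (σ i) (τ i) =
      M.det := by
    have h1 := Matrix.det_permute σ M
    rw [← Matrix.det_transpose, Matrix.det_apply'] at h1
    simp only [Matrix.transpose_apply, Matrix.submatrix_apply, id] at h1
    simp only [mul_assoc, ← Finset.mul_sum]
    rw [h1, ← mul_assoc, ← Int.cast_mul, Int.units_coe_mul_self, Int.cast_one, one_mul]
  simp [h, Fintype.card_perm]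

theorem detMoment_two (hμ : MemLp (fun x : ℝ => x) 2 μ) (n : ℕ) :
    detMoment μ 2 n = n.factorial *
      (secondMomentMatrix (mom μ 2 - mom μ 1 ^ 2) (mom μ 1 ^ 2) n).det := by
  have hdet (A : Fin n → Fin n → ℝ) : (Matrix.det (Matrix.of A)) ^ 2 =
      ∑ σ : Equiv.Perm (Fin n), ∑ τ : Equiv.Perm (Fin n),
        ((Equiv.Perm.sign σ : ℤ) : ℝ) * ((Equiv.Perm.sign τ : ℤ) : ℝ) *
          ∏ i, (A i (σ i) * A i (τ i)) := by
    rw [← Matrix.det_transpose, Matrix.det_apply', pow_two, Finset.sum_mul_sum]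
    refine Finset.sum_congr rfl fun σ _ => Finset.sum_congr rfl fun τ _ => ?_
    simp only [Matrix.transpose_apply, Matrix.of_apply, Finset.prod_mul_distrib]
    ring
  have hI (σ τ : Equiv.Perm (Fin n)) : Integrable (fun A : Fin n → Fin n → ℝ =>
      ((Equiv.Perm.sign σ : ℤ) : ℝ) * ((Equiv.Perm.sign τ : ℤ) : ℝ) *
        ∏ i, (A i (σ i) * A i (τ i)))
      (Measure.pi fun _ : Fin n => Measure.pi fun _ : Fin n => μ) :=
    (Integrable.fintype_prod (f := fun i (r : Fin n → ℝ) => r (σ i) * r (τ i))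
      fun i => integrable_entry_mul_entry hμ (σ i) (τ i)).const_mul _
  rw [← sum_sum_sign_mul_prod, detMoment]
  simp only [hdet]
  rw [integral_finsetSum _ fun σ _ => integrable_finsetSum _ fun τ _ => hI σ τ]
  refine Finset.sum_congr rfl fun σ _ => ?_
  rw [integral_finsetSum _ fun τ _ => hI σ τ]
  refine Finset.sum_congr rfl fun τ _ => ?_
  rw [integral_const_mul,
    integral_fintype_prod_eq_prod (fun i (r : Fin n → ℝ) => r (σ i) * r (τ i))]
  simp only [integral_entry_mul_entry]

end SecondMoments

theorem hasSum_add_mul_pow_div_factorial (a b t : ℝ) :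
    HasSum (fun n : ℕ => (a ^ n + n * b * a ^ (n - 1)) * t ^ n / (n.factorial : ℝ))
      ((1 + b * t) * Real.exp (a * t)) := by
  have h1 : HasSum (fun n : ℕ => (a * t) ^ n / (n.factorial : ℝ)) (Real.exp (a * t)) := by
    rw [Real.exp_eq_exp_ℝ]
    exact NormedSpace.expSeries_div_hasSum_exp (a * t)
  have h2 : HasSum (fun n : ℕ => n * b * a ^ (n - 1) * t ^ n / (n.factorial : ℝ))
      (b * t * Real.exp (a * t)) := by
    rw [← hasSum_nat_add_iff' 1]
    simp only [Finset.sum_range_one, Nat.cast_zero, zero_mul, zero_div, sub_zero]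
    refine (h1.mul_left (b * t)).congr_fun fun n => ?_
    have hn : (n : ℝ) + 1 ≠ 0 := by positivity
    rw [Nat.factorial_succ, Nat.add_sub_cancel]
    push_cast
    field_simp
    ring
  convert h1.add h2 using 1
  · ext n
    ring
  · ring

theorem second_moment_generating_function (μ : Measure ℝ) [IsProbabilityMeasure μ]
    (hint : Integrable (fun x : ℝ => |x| ^ 2) μ) (t : ℝ) :
    HasSum (fun n : ℕ => detMoment μ 2 n * t ^ n / (Nat.factorial n : ℝ) ^ 2)
      ((1 + (mom μ 1) ^ 2 * t) * Real.exp ((mom μ 2 - (mom μ 1) ^ 2) * t)) := by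
  have hμ : MemLp (fun x : ℝ => x) 2 μ :=
    (memLp_two_iff_integrable_sq (by fun_prop)).2 (by simpa only [sq_abs] using hint)
  refine (hasSum_add_mul_pow_div_factorial (mom μ 2 - mom μ 1 ^ 2) (mom μ 1 ^ 2) t).congr_fun
    fun n => ?_
  rw [detMoment_two hμ, det_secondMomentMatrix]
  have hn : (n.factorial : ℝ) ≠ 0 := by positivity
  field_simp
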